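/- Fix t > 0. The function K ↦ log(η_K(t) + 1) is convex on (0, ∞), and the function K ↦ log(η_K(t)) is concave on (0, ∞). In particular, for all K, L > 0 with K ≠ L and all p, q ∈ (0,1) with p + q = 1, one has η_K(t)^p · η_L(t)^q < η_{pK+qL}(t) < (η_K(t) + 1)^p · (η_L(t) + 1)^q − 1. -/

import Mathlib

open Set Filter

/-- Complete elliptic integral of the first kind. -/
noncomputable def ellK (r : ℝ) : ℝ :=
  ∫ θ in (0:ℝ)..(Real.pi / 2), (1 - r ^ 2 * Real.sin θ ^ 2) ^ (-(1/2) : ℝ)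

/-- The Grötzsch modulus μ(r) = (π/2)·𝒦'(r)/𝒦(r). -/
noncomputable def mu (r : ℝ) : ℝ :=
  Real.pi / 2 * ellK (Real.sqrt (1 - r ^ 2)) / ellK r

/-!
Put `x = u²`. Then `log (η + 1) = -log x` and `log η = -logit x`, while the defining equation says
that `R(x) = 𝒦'/𝒦` is proportional to `K`. Legendre's relation gives
`R'(x) = -c / (2 x (1 - x) 𝒦²)` with a constant `c > 0`, so as a function of `v = -logit x` the
ratio has derivative `c / (2 𝒦²)`, and as a function of `w = -log x` it has derivative
`c / (2 (1 - x) 𝒦²)`. Since `(1 - x) 𝒦 < ℰ < 𝒦`, the function `𝒦` increases and `(1 - x) 𝒦²`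
decreases in `x`; as `x` decreases in `v` and `w`, the ratio is convex in `v` and concave in `w`.
Inverting an increasing function exchanges convexity and concavity.
-/

open Real Topology

section Convexity

variable {𝕜 E β γ : Type*} [Semiring 𝕜] [PartialOrder 𝕜]
  [AddCommMonoid E] [SMul 𝕜 E] [AddCommMonoid β] [LinearOrder β] [SMul 𝕜 β]
  [AddCommMonoid γ] [PartialOrder γ] [SMul 𝕜 γ]
  {s : Set β} {t : Set E} {f : β → γ} {φ : E → β}

lemma strictConvexOn_of_convexOn_comp (hf : StrictConcaveOn 𝕜 s f) (hmono : StrictMonoOn f s)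
    (hφ : MapsTo φ t s) (hinj : InjOn φ t) (hcomp : ConvexOn 𝕜 t (f ∘ φ)) :
    StrictConvexOn 𝕜 t φ := by
  refine ⟨hcomp.1, fun x hx y hy hxy a b ha hb hab => ?_⟩
  refine (hmono.lt_iff_lt (hφ (hcomp.1 hx hy ha.le hb.le hab))
    (hf.1 (hφ hx) (hφ hy) ha.le hb.le hab)).1 ?_
  exact (hcomp.2 hx hy ha.le hb.le hab).trans_lt
    (hf.2 (hφ hx) (hφ hy) (hinj.ne hx hy hxy) ha hb hab)

lemma strictConcaveOn_of_concaveOn_comp (hf : StrictConvexOn 𝕜 s f) (hmono : StrictMonoOn f s)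
    (hφ : MapsTo φ t s) (hinj : InjOn φ t) (hcomp : ConcaveOn 𝕜 t (f ∘ φ)) :
    StrictConcaveOn 𝕜 t φ := by
  refine ⟨hcomp.1, fun x hx y hy hxy a b ha hb hab => ?_⟩
  refine (hmono.lt_iff_lt (hf.1 (hφ hx) (hφ hy) ha.le hb.le hab)
    (hφ (hcomp.1 hx hy ha.le hb.le hab))).1 ?_
  exact (hf.2 (hφ hx) (hφ hy) (hinj.ne hx hy hxy) ha hb hab).trans_le
    (hcomp.2 hx hy ha.le hb.le hab)

end Convexity

lemma tendsto_atTop_of_convexOn_Ici {f : ℝ → ℝ} {x y : ℝ} (hf : ConvexOn ℝ (Ici x) f)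
    (hxy : x < y) (hfxy : f x < f y) : Tendsto f atTop atTop := by
  have hslope : 0 < (f y - f x) / (y - x) := div_pos (sub_pos.2 hfxy) (sub_pos.2 hxy)
  have secant_le : ∀ᶠ z in atTop, f x + (f y - f x) / (y - x) * (z - x) ≤ f z := by
    filter_upwards [eventually_ge_atTop y] with z hyz
    have hxz : x < z := hxy.trans_le hyz
    have h := hf.secant_mono self_mem_Ici hxy.le hxz.le hxy.ne' hxz.ne' hyz
    linarith [(le_div_iff₀ (sub_pos.2 hxz)).1 h]
  refine tendsto_atTop_mono' atTop secant_le (tendsto_atTop_add_const_left _ _ ?_)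
  exact (tendsto_atTop_add_const_right _ (-x) tendsto_id).const_mul_atTop hslope

section LogConvexity

variable {E : Type*} [AddCommMonoid E] [SMul ℝ E] {s : Set E} {f : E → ℝ} {x y : E} {p q : ℝ}

lemma rpow_mul_rpow_lt_of_strictConcaveOn_log (hf : StrictConcaveOn ℝ s fun x => log (f x))
    (hpos : ∀ x ∈ s, 0 < f x) (hx : x ∈ s) (hy : y ∈ s) (hxy : x ≠ y) (hp : 0 < p) (hq : 0 < q)
    (hpq : p + q = 1) : f x ^ p * f y ^ q < f (p • x + q • y) := by
  have hfx := rpow_pos_of_pos (hpos x hx) p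
  have hfy := rpow_pos_of_pos (hpos y hy) q
  rw [← log_lt_log_iff (mul_pos hfx hfy) (hpos _ (hf.1 hx hy hp.le hq.le hpq)),
    log_mul hfx.ne' hfy.ne', log_rpow (hpos x hx), log_rpow (hpos y hy)]
  exact hf.2 hx hy hxy hp hq hpq

lemma lt_rpow_mul_rpow_of_strictConvexOn_log (hf : StrictConvexOn ℝ s fun x => log (f x))
    (hpos : ∀ x ∈ s, 0 < f x) (hx : x ∈ s) (hy : y ∈ s) (hxy : x ≠ y) (hp : 0 < p) (hq : 0 < q)
    (hpq : p + q = 1) : f (p • x + q • y) < f x ^ p * f y ^ q := by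
  have hfx := rpow_pos_of_pos (hpos x hx) p
  have hfy := rpow_pos_of_pos (hpos y hy) q
  rw [← log_lt_log_iff (hpos _ (hf.1 hx hy hp.le hq.le hpq)) (mul_pos hfx hfy),
    log_mul hfx.ne' hfy.ne', log_rpow (hpos x hx), log_rpow (hpos y hy)]
  exact hf.2 hx hy hxy hp hq hpq

end LogConvexity

lemma hasDerivAt_intervalIntegral_of_continuousOn {𝕜 E : Type*} [RCLike 𝕜]
    [NormedAddCommGroup E] [NormedSpace ℝ E] [NormedSpace 𝕜 E] {F F' : 𝕜 → ℝ → E} {U : Set 𝕜}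
    {x : 𝕜} {a b : ℝ} (hU : U ∈ 𝓝 x) (hF : ∀ y ∈ U, ContinuousOn (F y) (uIcc a b))
    (hF' : ContinuousOn (Function.uncurry F') (U ×ˢ uIcc a b))
    (hderiv : ∀ y ∈ U, ∀ θ ∈ uIcc a b, HasDerivAt (F · θ) (F' y θ) y) :
    HasDerivAt (fun y => ∫ θ in a..b, F y θ) (∫ θ in a..b, F' x θ) x := by
  obtain ⟨V, hV, hVU, hVcompact⟩ := local_compact_nhds hU
  obtain ⟨C, hC⟩ := (hVcompact.prod isCompact_uIcc).exists_bound_of_continuousOn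
    (hF'.mono (prod_mono_left hVU))
  have hF'x : ContinuousOn (F' x) (uIcc a b) :=
    hF'.comp (f := fun θ => (x, θ)) (by fun_prop) fun θ hθ => ⟨mem_of_mem_nhds hU, hθ⟩
  refine (intervalIntegral.hasDerivAt_integral_of_dominated_loc_of_deriv_le
    (bound := fun _ => C) hV ?_ ?_ ?_ ?_ intervalIntegrable_const ?_).2
  · filter_upwards [hU] with y hy
    exact ((hF y hy).mono uIoc_subset_uIcc).aestronglyMeasurable measurableSet_uIoc
  · exact (hF x (mem_of_mem_nhds hU)).intervalIntegrable
  · exact (hF'x.mono uIoc_subset_uIcc).aestronglyMeasurable measurableSet_uIoc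
  · exact .of_forall fun θ hθ y hy => hC (y, θ) ⟨hy, uIoc_subset_uIcc hθ⟩
  · exact .of_forall fun θ hθ y hy => hderiv y (hVU hy) θ (uIoc_subset_uIcc hθ)

/-- The integral `∫₀^{π/2} (1 - x sin² θ)^a dθ`. The parameter is `x = r²`, the square of the
modulus `r`; the exponents `∓1/2` give the complete elliptic integrals of the first and second
kind, and the other exponents enter when these are differentiated. -/
noncomputable def ellipticIntegral (a x : ℝ) : ℝ :=
  ∫ θ in (0 : ℝ)..(π / 2), (1 - x * sin θ ^ 2) ^ a

section EllipticIntegral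

variable {x : ℝ}

lemma one_sub_mul_sin_sq_pos (hx : x < 1) (θ : ℝ) : 0 < 1 - x * sin θ ^ 2 := by
  rcases le_total x 0 with h | h <;> nlinarith [sin_sq_le_one θ, sq_nonneg (sin θ)]

lemma continuous_one_sub_mul_sin_sq_rpow (a : ℝ) (hx : x < 1) :
    Continuous fun θ : ℝ => (1 - x * sin θ ^ 2) ^ a :=
  Continuous.rpow_const (by fun_prop) fun θ => .inl (one_sub_mul_sin_sq_pos hx θ).ne'

lemma intervalIntegrable_one_sub_mul_sin_sq_rpow (a : ℝ) (hx : x < 1) (b c : ℝ) :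
    IntervalIntegrable (fun θ : ℝ => (1 - x * sin θ ^ 2) ^ a) MeasureTheory.volume b c :=
  (continuous_one_sub_mul_sin_sq_rpow a hx).intervalIntegrable b c

lemma ellipticIntegral_pos (a : ℝ) (hx : x < 1) : 0 < ellipticIntegral a x :=
  intervalIntegral.intervalIntegral_pos_of_pos_on
    (intervalIntegrable_one_sub_mul_sin_sq_rpow a hx _ _)
    (fun θ _ => rpow_pos_of_pos (one_sub_mul_sin_sq_pos hx θ) a) pi_div_two_pos

lemma ellipticIntegral_add_one_lt (a : ℝ) (h0 : 0 < x) (h1 : x < 1) :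
    ellipticIntegral (a + 1) x < ellipticIntegral a x := by
  have integrand_eq (θ : ℝ) :
      (1 - x * sin θ ^ 2) ^ (a + 1) = (1 - x * sin θ ^ 2) ^ a * (1 - x * sin θ ^ 2) :=
    rpow_add_one (one_sub_mul_sin_sq_pos h1 θ).ne' a
  refine intervalIntegral.integral_lt_integral_of_continuousOn_of_le_of_exists_lt pi_div_two_pos
    (continuous_one_sub_mul_sin_sq_rpow _ h1).continuousOn
    (continuous_one_sub_mul_sin_sq_rpow _ h1).continuousOn (fun θ _ => ?_)
    ⟨π / 2, right_mem_Icc.2 pi_div_two_pos.le, ?_⟩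
  · rw [integrand_eq]
    exact mul_le_of_le_one_right (rpow_pos_of_pos (one_sub_mul_sin_sq_pos h1 θ) a).le
      (sub_le_self 1 (by positivity))
  · rw [integrand_eq]
    exact mul_lt_of_lt_one_right (rpow_pos_of_pos (one_sub_mul_sin_sq_pos h1 _) a)
      (by simpa using h0)

lemma one_sub_mul_ellipticIntegral_lt (a : ℝ) (h0 : 0 < x) (h1 : x < 1) :
    (1 - x) * ellipticIntegral a x < ellipticIntegral (a + 1) x := by
  have integrand_eq (θ : ℝ) :
      (1 - x * sin θ ^ 2) ^ (a + 1) = (1 - x * sin θ ^ 2) * (1 - x * sin θ ^ 2) ^ a := by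
    rw [rpow_add_one (one_sub_mul_sin_sq_pos h1 θ).ne', mul_comm]
  rw [ellipticIntegral, ← intervalIntegral.integral_const_mul]
  refine intervalIntegral.integral_lt_integral_of_continuousOn_of_le_of_exists_lt pi_div_two_pos
    ((continuous_one_sub_mul_sin_sq_rpow _ h1).const_mul _).continuousOn
    (continuous_one_sub_mul_sin_sq_rpow _ h1).continuousOn (fun θ _ => ?_)
    ⟨0, left_mem_Icc.2 pi_div_two_pos.le, ?_⟩
  · rw [integrand_eq]
    exact mul_le_mul_of_nonneg_right
      (sub_le_sub_left (mul_le_of_le_one_right h0.le (sin_sq_le_one θ)) 1)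
      (rpow_pos_of_pos (one_sub_mul_sin_sq_pos h1 θ) a).le
  · simpa using h0

lemma hasDerivAt_ellipticIntegral (a : ℝ) (h0 : x ≠ 0) (h1 : x < 1) :
    HasDerivAt (ellipticIntegral a)
      (a / x * (ellipticIntegral a x - ellipticIntegral (a - 1) x)) x := by
  have leibniz : HasDerivAt (ellipticIntegral a)
      (∫ θ in (0 : ℝ)..(π / 2), -(sin θ ^ 2) * a * (1 - x * sin θ ^ 2) ^ (a - 1)) x := by
    refine hasDerivAt_intervalIntegral_of_continuousOn
      (F' := fun y θ => -(sin θ ^ 2) * a * (1 - y * sin θ ^ 2) ^ (a - 1)) (Iio_mem_nhds h1)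
      (fun y hy => (continuous_one_sub_mul_sin_sq_rpow a hy).continuousOn) ?_ fun y hy θ _ => ?_
    · exact ContinuousOn.mul (by fun_prop) <| ContinuousOn.rpow_const (by fun_prop)
        fun p hp => .inl (one_sub_mul_sin_sq_pos hp.1 p.2).ne'
    · have base : HasDerivAt (fun y : ℝ => 1 - y * sin θ ^ 2) (-(sin θ ^ 2)) y := by
        simpa using ((hasDerivAt_id y).mul_const (sin θ ^ 2)).const_sub 1
      exact base.rpow_const (.inl (one_sub_mul_sin_sq_pos hy θ).ne')
  refine leibniz.congr_deriv ?_
  rw [ellipticIntegral, ellipticIntegral, ← intervalIntegral.integral_sub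
    (intervalIntegrable_one_sub_mul_sin_sq_rpow _ h1 _ _)
    (intervalIntegrable_one_sub_mul_sin_sq_rpow _ h1 _ _), ← intervalIntegral.integral_const_mul]
  refine intervalIntegral.integral_congr fun θ _ => ?_
  have hΔ : (1 - x * sin θ ^ 2) ^ a = (1 - x * sin θ ^ 2) ^ (a - 1) * (1 - x * sin θ ^ 2) := by
    rw [← rpow_add_one (one_sub_mul_sin_sq_pos h1 θ).ne', sub_add_cancel]
  simp only [hΔ]
  field_simp
  ring

-- Integrate the derivative of `x sin θ cos θ (1 - x sin² θ)^a`, which vanishes at both ends.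
lemma ellipticIntegral_recurrence (a : ℝ) (hx : x < 1) :
    2 * (a + 1) * ellipticIntegral (a + 1) x - (1 + 2 * a) * (2 - x) * ellipticIntegral a x
      + 2 * a * (1 - x) * ellipticIntegral (a - 1) x = 0 := by
  have hderiv (θ : ℝ) : HasDerivAt (fun θ => x * (sin θ * cos θ * (1 - x * sin θ ^ 2) ^ a))
      (2 * (a + 1) * (1 - x * sin θ ^ 2) ^ (a + 1)
        - (1 + 2 * a) * (2 - x) * (1 - x * sin θ ^ 2) ^ a
        + 2 * a * (1 - x) * (1 - x * sin θ ^ 2) ^ (a - 1)) θ := by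
    have hpos := one_sub_mul_sin_sq_pos hx θ
    have base : HasDerivAt (fun θ => 1 - x * sin θ ^ 2) (-(x * (2 * sin θ * cos θ))) θ := by
      simpa using (((hasDerivAt_sin θ).pow 2).const_mul x).const_sub 1
    refine ((((hasDerivAt_sin θ).mul (hasDerivAt_cos θ)).mul
      (base.rpow_const (p := a) (.inl hpos.ne'))).const_mul x).congr_deriv ?_
    have hΔ : (1 - x * sin θ ^ 2) ^ a = (1 - x * sin θ ^ 2) ^ (a - 1) * (1 - x * sin θ ^ 2) := by
      rw [← rpow_add_one hpos.ne', sub_add_cancel]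
    rw [rpow_add_one hpos.ne', hΔ]
    have hcos := cos_sq' θ
    generalize (1 - x * sin θ ^ 2) ^ (a - 1) = D
    simp only [Pi.mul_apply]
    linear_combination (D * x * (1 - x * sin θ ^ 2) - 2 * D * x ^ 2 * a * sin θ ^ 2) * hcos
  have hint (b : ℝ) := intervalIntegrable_one_sub_mul_sin_sq_rpow b hx 0 (π / 2)
  have ftc := intervalIntegral.integral_eq_sub_of_hasDerivAt (fun θ _ => hderiv θ)
    ((((hint _).const_mul _).sub ((hint _).const_mul _)).add ((hint _).const_mul _))
  rw [intervalIntegral.integral_add (((hint _).const_mul _).sub ((hint _).const_mul _))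
    ((hint _).const_mul _),
    intervalIntegral.integral_sub ((hint _).const_mul _) ((hint _).const_mul _)] at ftc
  simpa [ellipticIntegral] using ftc

/-- The complete elliptic integral of the first kind as a function of the parameter `x = r²`. -/
noncomputable def completeK (x : ℝ) : ℝ := ellipticIntegral (-(1 / 2)) x

/-- The complete elliptic integral of the second kind as a function of the parameter `x = r²`. -/
noncomputable def completeE (x : ℝ) : ℝ := ellipticIntegral (1 / 2) x

lemma ellK_eq_completeK (r : ℝ) : ellK r = completeK (r ^ 2) := rfl

lemma completeK_pos (hx : x < 1) : 0 < completeK x := ellipticIntegral_pos _ hx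

lemma completeE_lt_completeK (h0 : 0 < x) (h1 : x < 1) : completeE x < completeK x := by
  have h := ellipticIntegral_add_one_lt (-(1 / 2)) h0 h1
  rwa [show -(1 / 2) + 1 = (1 / 2 : ℝ) by norm_num] at h

lemma one_sub_mul_completeK_lt_completeE (h0 : 0 < x) (h1 : x < 1) :
    (1 - x) * completeK x < completeE x := by
  have h := one_sub_mul_ellipticIntegral_lt (-(1 / 2)) h0 h1
  rwa [show -(1 / 2) + 1 = (1 / 2 : ℝ) by norm_num] at h

lemma hasDerivAt_completeE (h0 : x ≠ 0) (h1 : x < 1) :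
    HasDerivAt completeE ((completeE x - completeK x) / (2 * x)) x := by
  refine (hasDerivAt_ellipticIntegral (1 / 2) h0 h1).congr_deriv ?_
  rw [completeE, completeK, show (1 / 2 - 1 : ℝ) = -(1 / 2) by norm_num]
  field_simp

lemma hasDerivAt_completeK (h0 : x ≠ 0) (h1 : x < 1) :
    HasDerivAt completeK ((completeE x - (1 - x) * completeK x) / (2 * x * (1 - x))) x := by
  have recurrence := ellipticIntegral_recurrence (-(1 / 2)) h1
  rw [show -(1 / 2) + 1 = (1 / 2 : ℝ) by norm_num] at recurrence
  refine (hasDerivAt_ellipticIntegral (-(1 / 2)) h0 h1).congr_deriv ?_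
  rw [completeE, completeK]
  have : 1 - x ≠ 0 := (sub_pos.2 h1).ne'
  field_simp
  linarith

end EllipticIntegral

/-- The ratio `𝒦'/𝒦` as a function of the parameter `x = r²`; on `(0, 1)` it is the Grötzsch
modulus up to the factor `π / 2`. -/
noncomputable def periodRatio (x : ℝ) : ℝ := completeK (1 - x) / completeK x

/-- The left-hand side `ℰ𝒦' + ℰ'𝒦 - 𝒦𝒦'` of Legendre's relation at the parameter `x = r²`. -/
noncomputable def legendreForm (x : ℝ) : ℝ :=
  completeE x * completeK (1 - x) + completeE (1 - x) * completeK x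
    - completeK x * completeK (1 - x)

section PeriodRatio

variable {x y : ℝ}

lemma strictMonoOn_completeK : StrictMonoOn completeK (Ioo 0 1) := by
  have hderiv {x : ℝ} (hx : x ∈ Ioo (0 : ℝ) 1) := hasDerivAt_completeK hx.1.ne' hx.2
  refine strictMonoOn_of_deriv_pos (convex_Ioo 0 1)
    (fun x hx => (hderiv hx).continuousAt.continuousWithinAt) fun x hx => ?_
  rw [interior_Ioo] at hx
  rw [(hderiv hx).deriv]
  have := sub_pos.2 hx.2
  have := hx.1
  exact div_pos (sub_pos.2 (one_sub_mul_completeK_lt_completeE hx.1 hx.2)) (by positivity)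

lemma strictAntiOn_one_sub_mul_completeK_sq :
    StrictAntiOn (fun x => (1 - x) * completeK x ^ 2) (Ioo 0 1) := by
  have hderiv {x : ℝ} (hx : x ∈ Ioo (0 : ℝ) 1) : HasDerivAt (fun x => (1 - x) * completeK x ^ 2)
      (completeK x * (completeE x - completeK x) / x) x := by
    refine (((hasDerivAt_id x).const_sub 1).mul
      ((hasDerivAt_completeK hx.1.ne' hx.2).pow 2)).congr_deriv ?_
    have := (sub_pos.2 hx.2).ne'
    have := hx.1.ne'
    simp only [id, Pi.pow_apply]
    field_simp
    push_cast
    ring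
  refine strictAntiOn_of_deriv_neg (convex_Ioo 0 1)
    (fun x hx => (hderiv hx).continuousAt.continuousWithinAt) fun x hx => ?_
  rw [interior_Ioo] at hx
  rw [(hderiv hx).deriv]
  exact div_neg_of_neg_of_pos (mul_neg_of_pos_of_neg (completeK_pos hx.2)
    (sub_neg.2 (completeE_lt_completeK hx.1 hx.2))) hx.1

lemma legendreForm_pos (hx : x ∈ Ioo (0 : ℝ) 1) : 0 < legendreForm x := by
  obtain ⟨h0', h1'⟩ := Ioo.one_sub_mem hx
  have hE := mul_lt_mul_of_pos_right (one_sub_mul_completeK_lt_completeE hx.1 hx.2)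
    (completeK_pos h1')
  have hE' := mul_lt_mul_of_pos_right (one_sub_mul_completeK_lt_completeE h0' h1')
    (completeK_pos hx.2)
  rw [legendreForm]
  linarith

lemma hasDerivAt_completeK_one_sub (hx : x ∈ Ioo (0 : ℝ) 1) :
    HasDerivAt (fun x => completeK (1 - x))
      (-((completeE (1 - x) - x * completeK (1 - x)) / (2 * x * (1 - x)))) x := by
  obtain ⟨h0', h1'⟩ := Ioo.one_sub_mem hx
  refine ((hasDerivAt_completeK h0'.ne' h1').comp_const_sub 1 x).congr_deriv ?_
  rw [sub_sub_cancel, mul_right_comm]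

lemma hasDerivAt_completeE_one_sub (hx : x ∈ Ioo (0 : ℝ) 1) :
    HasDerivAt (fun x => completeE (1 - x))
      (-((completeE (1 - x) - completeK (1 - x)) / (2 * (1 - x)))) x :=
  let h := Ioo.one_sub_mem hx
  (hasDerivAt_completeE h.1.ne' h.2).comp_const_sub 1 x

lemma legendreForm_eq (hx : x ∈ Ioo (0 : ℝ) 1) (hy : y ∈ Ioo (0 : ℝ) 1) :
    legendreForm x = legendreForm y := by
  have hderiv {x : ℝ} (hx : x ∈ Ioo (0 : ℝ) 1) : HasDerivAt legendreForm 0 x := by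
    have hK := hasDerivAt_completeK hx.1.ne' hx.2
    have hE := hasDerivAt_completeE hx.1.ne' hx.2
    have hK' := hasDerivAt_completeK_one_sub hx
    have hE' := hasDerivAt_completeE_one_sub hx
    refine (((hE.mul hK').add (hE'.mul hK)).sub (hK.mul hK')).congr_deriv ?_
    have := hx.1.ne'
    have := (sub_pos.2 hx.2).ne'
    field_simp
    ring
  exact isOpen_Ioo.is_const_of_deriv_eq_zero isPreconnected_Ioo
    (fun x hx => (hderiv hx).differentiableAt.differentiableWithinAt)
    (fun x hx => (hderiv hx).deriv) hx hy

lemma hasDerivAt_periodRatio (hx : x ∈ Ioo (0 : ℝ) 1) :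
    HasDerivAt periodRatio (-(legendreForm x / (2 * x * (1 - x) * completeK x ^ 2))) x := by
  have hK := completeK_pos hx.2
  refine ((hasDerivAt_completeK_one_sub hx).div (hasDerivAt_completeK hx.1.ne' hx.2)
    hK.ne').congr_deriv ?_
  have := hx.1.ne'
  have := (sub_pos.2 hx.2).ne'
  rw [legendreForm]
  field_simp
  ring

lemma periodRatio_pos (hx : x ∈ Ioo (0 : ℝ) 1) : 0 < periodRatio x :=
  div_pos (completeK_pos (Ioo.one_sub_mem hx).2) (completeK_pos hx.2)

lemma periodRatio_one_sub (x : ℝ) : periodRatio (1 - x) = (periodRatio x)⁻¹ := by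
  rw [periodRatio, periodRatio, sub_sub_cancel, inv_div]

lemma strictAntiOn_periodRatio : StrictAntiOn periodRatio (Ioo 0 1) := by
  refine strictAntiOn_of_deriv_neg (convex_Ioo 0 1)
    (fun x hx => (hasDerivAt_periodRatio hx).continuousAt.continuousWithinAt) fun x hx => ?_
  rw [interior_Ioo] at hx
  rw [(hasDerivAt_periodRatio hx).deriv, neg_lt_zero]
  have := hx.1
  have := sub_pos.2 hx.2
  have := completeK_pos hx.2
  have := legendreForm_pos hx
  positivity

lemma mu_sqrt (hx : x ∈ Ioo (0 : ℝ) 1) : mu √x = π / 2 * periodRatio x := by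
  rw [mu, ellK_eq_completeK, ellK_eq_completeK, sq_sqrt hx.1.le, sq_sqrt (sub_pos.2 hx.2).le,
    periodRatio, mul_div_assoc]

end PeriodRatio

section ChangeOfVariable

lemma exp_neg_mem_Ioo {w : ℝ} (hw : 0 < w) : exp (-w) ∈ Ioo (0 : ℝ) 1 :=
  ⟨exp_pos _, exp_lt_one_iff.2 (neg_lt_zero.2 hw)⟩

lemma sigmoid_mem_Ioo (v : ℝ) : sigmoid v ∈ Ioo (0 : ℝ) 1 := ⟨sigmoid_pos v, sigmoid_lt_one v⟩

lemma strictMonoOn_periodRatio_exp_neg : StrictMonoOn (fun w => periodRatio (exp (-w))) (Ioi 0) :=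
  fun _ hv _ hw hvw => strictAntiOn_periodRatio (exp_neg_mem_Ioo hw) (exp_neg_mem_Ioo hv)
    (exp_lt_exp.2 (neg_lt_neg hvw))

lemma strictMono_periodRatio_sigmoid_neg : StrictMono fun v => periodRatio (sigmoid (-v)) :=
  fun v w hvw => strictAntiOn_periodRatio (sigmoid_mem_Ioo (-w)) (sigmoid_mem_Ioo (-v))
    (sigmoid_lt (neg_lt_neg hvw))

lemma hasDerivAt_periodRatio_exp_neg {w : ℝ} (hw : 0 < w) :
    HasDerivAt (fun w => periodRatio (exp (-w)))
      (legendreForm (exp (-w)) / (2 * ((1 - exp (-w)) * completeK (exp (-w)) ^ 2))) w := by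
  have hx := exp_neg_mem_Ioo hw
  refine ((hasDerivAt_periodRatio hx).comp w (hasDerivAt_neg w).exp).congr_deriv ?_
  have := (sub_pos.2 hx.2).ne'
  have := (completeK_pos hx.2).ne'
  field_simp

lemma hasDerivAt_periodRatio_sigmoid_neg (v : ℝ) :
    HasDerivAt (fun v => periodRatio (sigmoid (-v)))
      (legendreForm (sigmoid (-v)) / (2 * completeK (sigmoid (-v)) ^ 2)) v := by
  have hx := sigmoid_mem_Ioo (-v)
  refine ((hasDerivAt_periodRatio hx).comp v
    ((hasDerivAt_sigmoid (-v)).comp v (hasDerivAt_neg v))).congr_deriv ?_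
  have := hx.1.ne'
  have := (sub_pos.2 hx.2).ne'
  have := (completeK_pos hx.2).ne'
  field_simp

lemma strictConcaveOn_periodRatio_exp_neg :
    StrictConcaveOn ℝ (Ioi 0) fun w => periodRatio (exp (-w)) := by
  refine StrictAntiOn.strictConcaveOn_of_deriv (convex_Ioi 0)
    (fun w hw => (hasDerivAt_periodRatio_exp_neg hw).continuousAt.continuousWithinAt) ?_
  rw [interior_Ioi]
  intro v hv w hw hvw
  have hxv := exp_neg_mem_Ioo hv
  have hxw := exp_neg_mem_Ioo hw
  rw [(hasDerivAt_periodRatio_exp_neg hv).deriv, (hasDerivAt_periodRatio_exp_neg hw).deriv,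
    legendreForm_eq hxw hxv]
  have hK := strictAntiOn_one_sub_mul_completeK_sq hxw hxv (exp_lt_exp.2 (neg_lt_neg hvw))
  have := mul_pos (sub_pos.2 hxv.2) (pow_pos (completeK_pos hxv.2) 2)
  exact div_lt_div_of_pos_left (legendreForm_pos hxv) (by positivity)
    (mul_lt_mul_of_pos_left hK two_pos)

lemma strictConvexOn_periodRatio_sigmoid_neg :
    StrictConvexOn ℝ univ fun v => periodRatio (sigmoid (-v)) := by
  refine StrictMonoOn.strictConvexOn_of_deriv convex_univ
    (fun v _ => (hasDerivAt_periodRatio_sigmoid_neg v).continuousAt.continuousWithinAt) ?_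
  intro v _ w _ hvw
  have hxv := sigmoid_mem_Ioo (-v)
  have hxw := sigmoid_mem_Ioo (-w)
  rw [(hasDerivAt_periodRatio_sigmoid_neg v).deriv, (hasDerivAt_periodRatio_sigmoid_neg w).deriv,
    legendreForm_eq hxw hxv]
  have hK := strictMonoOn_completeK hxw hxv (sigmoid_lt (neg_lt_neg hvw))
  have := completeK_pos hxw.2
  exact div_lt_div_of_pos_left (legendreForm_pos hxv) (by positivity) (by gcongr)

-- No asymptotics of `𝒦` at `1` are needed: strict convexity in `v` makes
-- `periodRatio (sigmoid (-v))` unbounded as `v → ∞`, and the symmetry `v ↦ -v` inverts it.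
lemma surjOn_periodRatio : SurjOn periodRatio (Ioo 0 1) (Ioi 0) := by
  intro c hc
  have htop : Tendsto (fun v => periodRatio (sigmoid (-v))) atTop atTop :=
    tendsto_atTop_of_convexOn_Ici
      (strictConvexOn_periodRatio_sigmoid_neg.convexOn.subset (subset_univ _) (convex_Ici 0))
      zero_lt_one (strictMono_periodRatio_sigmoid_neg zero_lt_one)
  have exists_ge : ∃ v, c ≤ periodRatio (sigmoid (-v)) := (htop.eventually_ge_atTop c).exists
  have exists_le : ∃ v, periodRatio (sigmoid (-v)) ≤ c := by
    obtain ⟨v, hv⟩ := (htop.eventually_ge_atTop c⁻¹).exists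
    refine ⟨-v, ?_⟩
    rw [sigmoid_neg, periodRatio_one_sub]
    exact inv_le_of_inv_le₀ hc hv
  have hcont : Continuous fun v => periodRatio (sigmoid (-v)) :=
    continuous_iff_continuousAt.2 fun v => (hasDerivAt_periodRatio_sigmoid_neg v).continuousAt
  obtain ⟨v, hv⟩ := mem_range_of_exists_le_of_exists_ge hcont exists_le exists_ge
  exact ⟨sigmoid (-v), sigmoid_mem_Ioo _, hv⟩

end ChangeOfVariable

section Distortion

variable {E : Type*} [AddCommMonoid E] [SMul ℝ E] {s : Set E} {y : E → ℝ}

lemma strictConvexOn_log_add_one (hpos : ∀ k ∈ s, 0 < y k) (hinj : InjOn y s)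
    (hy : ConvexOn ℝ s fun k => periodRatio (y k + 1)⁻¹) :
    StrictConvexOn ℝ s fun k => log (y k + 1) := by
  have hpos' (k) (hk : k ∈ s) : 0 < y k + 1 := by linarith [hpos k hk]
  refine strictConvexOn_of_convexOn_comp strictConcaveOn_periodRatio_exp_neg
    strictMonoOn_periodRatio_exp_neg (fun k hk => log_pos (by linarith [hpos k hk])) ?_ ?_
  · exact log_injOn_pos.comp ((add_left_injective 1).comp_injOn hinj) hpos'
  · refine hy.congr fun k hk => ?_
    simp only [Function.comp_apply, exp_neg, exp_log (hpos' k hk)]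

lemma strictConcaveOn_log (hpos : ∀ k ∈ s, 0 < y k) (hinj : InjOn y s)
    (hy : ConcaveOn ℝ s fun k => periodRatio (y k + 1)⁻¹) :
    StrictConcaveOn ℝ s fun k => log (y k) := by
  refine strictConcaveOn_of_concaveOn_comp strictConvexOn_periodRatio_sigmoid_neg
    (strictMono_periodRatio_sigmoid_neg.strictMonoOn _) (mapsTo_univ _ _)
    (log_injOn_pos.comp hinj hpos) ?_
  refine hy.congr fun k hk => ?_
  simp only [Function.comp_apply, sigmoid_def, neg_neg, exp_log (hpos k hk), add_comm (1 : ℝ)]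

end Distortion

lemma inv_one_add_mem_Ioo {t : ℝ} (ht : 0 < t) : (1 + t)⁻¹ ∈ Ioo (0 : ℝ) 1 :=
  ⟨by positivity, inv_lt_one_of_one_lt₀ (lt_add_of_pos_right 1 ht)⟩

lemma pos_and_periodRatio_inv_add_one_eq {K t y : ℝ} (hK : 0 < K) (ht : 0 < t)
    (hy : ∀ u ∈ Ioo (0 : ℝ) 1, mu u = K * mu (1 / √(1 + t)) → y = 1 / u ^ 2 - 1) :
    0 < y ∧ periodRatio (y + 1)⁻¹ = K * periodRatio (1 + t)⁻¹ := by
  have hx₀ := inv_one_add_mem_Ioo ht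
  obtain ⟨x, hx, hxK⟩ := surjOn_periodRatio (mul_pos hK (periodRatio_pos hx₀))
  have hmu : mu √x = K * mu (1 / √(1 + t)) := by
    rw [one_div, ← sqrt_inv, mu_sqrt hx, mu_sqrt hx₀, hxK]
    ring
  have hyx : y = x⁻¹ - 1 := by
    rw [hy √x ⟨sqrt_pos.2 hx.1, (sqrt_lt' one_pos).2 (by simpa using hx.2)⟩ hmu,
      sq_sqrt hx.1.le, one_div]
  rw [hyx]
  exact ⟨sub_pos.2 ((one_lt_inv₀ hx.1).2 hx.2), by rw [sub_add_cancel, inv_inv, hxK]⟩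

theorem stmt_14 (eta : ℝ → ℝ → ℝ)
    (heta : ∀ K t : ℝ, 0 < K → 0 < t → ∀ u ∈ Set.Ioo (0:ℝ) 1,
      mu u = K * mu (1 / Real.sqrt (1 + t)) → eta K t = 1 / u ^ 2 - 1) (t : ℝ) (ht : 0 < t) :
    ConvexOn ℝ (Set.Ioi 0) (fun K : ℝ => Real.log (eta K t + 1)) ∧
    ConcaveOn ℝ (Set.Ioi 0) (fun K : ℝ => Real.log (eta K t)) ∧
    ∀ K L p q : ℝ, 0 < K → 0 < L → K ≠ L → p ∈ Set.Ioo (0:ℝ) 1 →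
      q ∈ Set.Ioo (0:ℝ) 1 → p + q = 1 →
      eta K t ^ p * eta L t ^ q < eta (p * K + q * L) t ∧
      eta (p * K + q * L) t < (eta K t + 1) ^ p * (eta L t + 1) ^ q - 1 := by
  set m := periodRatio (1 + t)⁻¹
  have hm : 0 < m := periodRatio_pos (inv_one_add_mem_Ioo ht)
  have hsol (K) (hK : K ∈ Ioi (0 : ℝ)) :=
    pos_and_periodRatio_inv_add_one_eq hK ht (heta K t hK ht)
  have hpos (K) (hK : K ∈ Ioi (0 : ℝ)) : 0 < eta K t := (hsol K hK).1
  have hratio : EqOn (fun K => periodRatio (eta K t + 1)⁻¹) (LinearMap.mulRight ℝ m) (Ioi 0) :=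
    fun K hK => (hsol K hK).2
  have hinj : InjOn (fun K => eta K t) (Ioi 0) := InjOn.of_comp
    (g := fun y => periodRatio (y + 1)⁻¹) (hratio.injOn_iff.2 (mul_left_injective₀ hm.ne').injOn)
  have hconv : StrictConvexOn ℝ (Ioi 0) fun K => log (eta K t + 1) :=
    strictConvexOn_log_add_one hpos hinj
      (((LinearMap.mulRight ℝ m).convexOn (convex_Ioi 0)).congr hratio.symm)
  have hconc : StrictConcaveOn ℝ (Ioi 0) fun K => log (eta K t) :=
    strictConcaveOn_log hpos hinj
      (((LinearMap.mulRight ℝ m).concaveOn (convex_Ioi 0)).congr hratio.symm)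
  refine ⟨hconv.convexOn, hconc.concaveOn, fun K L p q hK hL hKL hp hq hpq => ⟨?_, ?_⟩⟩
  · exact rpow_mul_rpow_lt_of_strictConcaveOn_log hconc hpos hK hL hKL hp.1 hq.1 hpq
  · exact lt_sub_right_of_add_lt <| lt_rpow_mul_rpow_of_strictConvexOn_log hconv
      (fun K hK => add_pos (hpos K hK) one_pos) hK hL hKL hp.1 hq.1 hpq
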